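/- For every natural number n ≥ 3, the characteristic polynomial of the n-th power of the 3×3 rational matrix H = [[1,1,1],[1,0,0],[0,1,0]] is y³ - K_n·y² + R_n·y - 1, where K_n = (9H_{n+2} - 2H_{n+1} + 35H_n)/41 and R_n = (4H_nH_{n-1} + 2H_nH_{n-2} + 6H_nH_{n-3} + 6H_n² - 6H_{n+1}H_{n-1} - 6H_{n-1}H_{n-2} - 4H_{n+1}H_{n-2} + H_{n+1}H_{n-3} - 3H_{n-1}²)/41. -/

import Mathlib

open Polynomial

/-- The generalized Tribonacci sequence. -/
def genTrib : ℕ → ℤ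
  | 0 => 3
  | 1 => 0
  | 2 => 2
  | n + 3 => genTrib (n + 2) + genTrib (n + 1) + genTrib n

/-- The powers of the matrix, in terms of three consecutive values of the sequence. -/
def powForm (a b c : ℚ) : Matrix (Fin 3) (Fin 3) ℚ :=
  !![((26)*a + (36)*b + (43)*c)/41, ((17)*a + (33)*b + (36)*c)/41, ((10)*a + (17)*b + (26)*c)/41;
    ((10)*a + (17)*b + (26)*c)/41, ((16)*a + (19)*b + (17)*c)/41, ((7)*a + (16)*b + (10)*c)/41;
    ((7)*a + (16)*b + (10)*c)/41, ((3)*a + (1)*b + (16)*c)/41, ((9)*a + (3)*b + (7)*c)/41]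

theorem genTrib_rec (n : ℕ) :
    genTrib (n + 3) = genTrib (n + 2) + genTrib (n + 1) + genTrib n := by
  rw [genTrib]

theorem pow_eq_powForm (m : ℕ) :
    (!![1, 1, 1; 1, 0, 0; 0, 1, 0] : Matrix (Fin 3) (Fin 3) ℚ) ^ (m + 3) =
      powForm (genTrib m) (genTrib (m + 1)) (genTrib (m + 2)) := by
  induction m with
  | zero =>
    ext i j
    fin_cases i <;> fin_cases j <;>
      simp [powForm, pow_succ, Matrix.mul_apply, Fin.sum_univ_three, genTrib] <;> norm_num
  | succ m ih =>
    rw [show m + 1 + 3 = (m + 3) + 1 by ring, pow_succ, ih]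
    have h := genTrib_rec m
    have h' : (genTrib (m + 1 + 2) : ℚ) = genTrib (m + 2) + genTrib (m + 1) + genTrib m := by
      exact_mod_cast h
    rw [h']
    rw [show m + 1 + 1 = m + 2 by ring]
    generalize (genTrib m : ℚ) = a
    generalize (genTrib (m + 1) : ℚ) = b
    generalize (genTrib (m + 2) : ℚ) = c
    ext i j
    fin_cases i <;> fin_cases j <;>
      simp [powForm, Matrix.mul_apply, Fin.sum_univ_three] <;> ring

theorem charpoly_three (A : Matrix (Fin 3) (Fin 3) ℚ) :
    A.charpoly = X ^ 3 - C (A 0 0 + A 1 1 + A 2 2) * X ^ 2 +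
      C (A 0 0 * A 1 1 - A 0 1 * A 1 0 + A 0 0 * A 2 2 - A 0 2 * A 2 0 +
        A 1 1 * A 2 2 - A 1 2 * A 2 1) * X - C A.det := by
  rw [Matrix.charpoly, Matrix.det_fin_three, Matrix.det_fin_three]
  simp [Matrix.charmatrix_apply]
  ring

theorem charpoly_matrix_power (n : ℕ) (hn : 3 ≤ n) :
    ((!![1, 1, 1; 1, 0, 0; 0, 1, 0] : Matrix (Fin 3) (Fin 3) ℚ) ^ n).charpoly =
      X ^ 3 -
        C ((9 * (genTrib (n + 2) : ℚ) - 2 * (genTrib (n + 1) : ℚ) + 35 * (genTrib n : ℚ)) / 41) *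
          X ^ 2 +
        C ((4 * (genTrib n : ℚ) * (genTrib (n - 1) : ℚ) +
            2 * (genTrib n : ℚ) * (genTrib (n - 2) : ℚ) +
            6 * (genTrib n : ℚ) * (genTrib (n - 3) : ℚ) + 6 * (genTrib n : ℚ) ^ 2 -
            6 * (genTrib (n + 1) : ℚ) * (genTrib (n - 1) : ℚ) -
            6 * (genTrib (n - 1) : ℚ) * (genTrib (n - 2) : ℚ) -
            4 * (genTrib (n + 1) : ℚ) * (genTrib (n - 2) : ℚ) +
            (genTrib (n + 1) : ℚ) * (genTrib (n - 3) : ℚ) -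
            3 * (genTrib (n - 1) : ℚ) ^ 2) / 41) * X - 1 := by
  obtain ⟨m, rfl⟩ := Nat.exists_eq_add_of_le' hn
  have hdet : ((!![1, 1, 1; 1, 0, 0; 0, 1, 0] : Matrix (Fin 3) (Fin 3) ℚ) ^ (m + 3)).det = 1 := by
    rw [Matrix.det_pow, Matrix.det_fin_three]
    simp
  rw [charpoly_three, hdet, pow_eq_powForm]
  rw [show m + 3 - 1 = m + 2 by omega, show m + 3 - 2 = m + 1 by omega,
    show m + 3 - 3 = m by omega, map_one]
  have h3 : (genTrib (m + 3) : ℚ) = genTrib (m + 2) + genTrib (m + 1) + genTrib m := by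
    exact_mod_cast genTrib_rec m
  have h4 : (genTrib (m + 3 + 1) : ℚ) = genTrib (m + 3) + genTrib (m + 2) + genTrib (m + 1) := by
    exact_mod_cast genTrib_rec (m + 1)
  have h5 : (genTrib (m + 3 + 2) : ℚ) =
      genTrib (m + 3 + 1) + genTrib (m + 3) + genTrib (m + 2) := by
    exact_mod_cast genTrib_rec (m + 2)
  rw [h5, h4, h3]
  generalize (genTrib m : ℚ) = a
  generalize (genTrib (m + 1) : ℚ) = b
  generalize (genTrib (m + 2) : ℚ) = c
  congr 3
  · congr 2
    simp [powForm]
    ring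
  · congr 1
    simp [powForm]
    ring
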